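/- arXiv:1907.11492 — 8 statements merged into one kernel-verified Lean document; each statement's English description precedes it below -/
import Mathlib

section
/- For every E ∈ ℝ, the matrix T(E)ᵀ Jᵀ T′(E) is symmetric positive semidefinite; indeed it equals the sum over k ∈ {0,…,L−1} of the positive semidefinite matrices P_kᵀ · diag(1/t(k)², 0) · P_k, where P_k = T̂_{v(k−1)−E,t(k−1)} ⋯ T̂_{v(0)−E,t(0)} is the partial product of the first k transfer matrices (P_0 = I). -/
open Matrix

/-- The single-site transfer matrix `T̂_{v̂,t̂} = (1/t̂)·((v̂, −t̂²),(1, 0))`. -/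
noncomputable def siteTransfer (v t : ℝ) : Matrix (Fin 2) (Fin 2) ℝ :=
  (1 / t) • !![v, -t ^ 2; 1, 0]

/-- The partial products `P_k = T̂_{v(k−1)−E,t(k−1)} ⋯ T̂_{v(0)−E,t(0)}`, with `P_0 = I`. -/
noncomputable def partialTransfer (t v : ℕ → ℝ) (E : ℝ) : ℕ → Matrix (Fin 2) (Fin 2) ℝ
  | 0 => 1
  | k + 1 => siteTransfer (v k - E) (t k) * partialTransfer t v E k

theorem partialTransfer_aux (t v : ℕ → ℝ) (E : ℝ) (L : ℕ) (ht : ∀ k < L, 0 < t k) :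
    ∃ D : Matrix (Fin 2) (Fin 2) ℝ,
      (∀ i j, HasDerivAt (fun E : ℝ => partialTransfer t v E L i j) (D i j) E) ∧
      (partialTransfer t v E L)ᵀ * (!![0, -1; 1, 0] : Matrix (Fin 2) (Fin 2) ℝ)ᵀ * D =
      ∑ k ∈ Finset.range L,
        (partialTransfer t v E k)ᵀ * Matrix.diagonal ![1 / t k ^ 2, 0] *
          partialTransfer t v E k := by
  induction L with
  | zero =>
    refine ⟨0, fun i j => ?_, by simp⟩
    simpa [partialTransfer] using hasDerivAt_const E ((1 : Matrix (Fin 2) (Fin 2) ℝ) i j)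
  | succ L ih =>
    obtain ⟨D, hD, hs⟩ := ih (fun k hk => ht k (by omega))
    have h0 : t L ≠ 0 := (ht L (by omega)).ne'
    let S' : Matrix (Fin 2) (Fin 2) ℝ := !![-(1 / t L), 0; 0, 0]
    have hS : ∀ i j, HasDerivAt (fun E : ℝ => siteTransfer (v L - E) (t L) i j) (S' i j) E := by
      intro i j
      fin_cases i <;> fin_cases j
      · simpa [siteTransfer, S'] using ((hasDerivAt_id E).const_sub (v L)).const_mul (t L)⁻¹
      · simpa [siteTransfer, S'] using hasDerivAt_const E (-((t L)⁻¹ * t L ^ 2))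
      · simpa [siteTransfer, S'] using hasDerivAt_const E ((t L)⁻¹)
      · simpa [siteTransfer, S'] using hasDerivAt_const E (0 : ℝ)
    refine ⟨S' * partialTransfer t v E L + siteTransfer (v L - E) (t L) * D, ?_, ?_⟩
    · intro i j
      have h := ((hS i 0).mul (hD 0 j)).add ((hS i 1).mul (hD 1 j))
      refine (h.congr_deriv ?_).congr_of_eventuallyEq (Filter.Eventually.of_forall fun x => ?_)
      · simp [Matrix.mul_apply, Fin.sum_univ_two]; ring
      · simp [partialTransfer, Matrix.mul_apply, Fin.sum_univ_two]
    · rw [Finset.sum_range_succ, ← hs]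
      have h1 : (siteTransfer (v L - E) (t L))ᵀ *
          (!![0, -1; 1, 0] : Matrix (Fin 2) (Fin 2) ℝ)ᵀ * S' =
          Matrix.diagonal ![1 / t L ^ 2, 0] := by
        ext i j
        fin_cases i <;> fin_cases j <;>
          simp [siteTransfer, S', Matrix.mul_apply, Fin.sum_univ_two] <;> field_simp
      have h2 : (siteTransfer (v L - E) (t L))ᵀ *
          (!![0, -1; 1, 0] : Matrix (Fin 2) (Fin 2) ℝ)ᵀ * siteTransfer (v L - E) (t L) =
          (!![0, -1; 1, 0] : Matrix (Fin 2) (Fin 2) ℝ)ᵀ := by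
        ext i j
        fin_cases i <;> fin_cases j <;>
          simp [siteTransfer, Matrix.mul_apply, Fin.sum_univ_two] <;> field_simp <;> ring
      conv_rhs => rw [← h2, ← h1]
      simp only [partialTransfer, Matrix.transpose_mul, Matrix.mul_add, Matrix.mul_assoc]
      rw [add_comm]

/-- For every `E`, the matrix `T(E)ᵀ Jᵀ T′(E)` equals the sum over `k < L` of the
positive semidefinite matrices `P_kᵀ · diag(1/t(k)², 0) · P_k`, and is in particular symmetric
positive semidefinite. Here `T(E) = P_L` and `T′(E)` is the entrywise derivative in `E`. -/
theorem transfer_matrix_energy_derivative_posSemidef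
    (L : ℕ) (t v : ℕ → ℝ) (ht : ∀ k < L, 0 < t k)
    (T' : ℝ → Matrix (Fin 2) (Fin 2) ℝ)
    (hT' : ∀ (i j : Fin 2) (E : ℝ),
      HasDerivAt (fun E : ℝ => partialTransfer t v E L i j) (T' E i j) E)
    (E : ℝ) :
    (partialTransfer t v E L)ᵀ * (!![0, -1; 1, 0] : Matrix (Fin 2) (Fin 2) ℝ)ᵀ * T' E =
      ∑ k ∈ Finset.range L,
        (partialTransfer t v E k)ᵀ * Matrix.diagonal ![1 / t k ^ 2, 0] *
          partialTransfer t v E k ∧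
    ((partialTransfer t v E L)ᵀ * (!![0, -1; 1, 0] : Matrix (Fin 2) (Fin 2) ℝ)ᵀ *
      T' E).PosSemidef := by
  obtain ⟨D, hD, hs⟩ := partialTransfer_aux t v E L ht
  have hDT : T' E = D := by
    ext i j
    exact (hT' i j E).unique (hD i j)
  rw [hDT, hs]
  refine ⟨rfl, Matrix.posSemidef_sum _ fun k _ => ?_⟩
  have hd : (Matrix.diagonal ![1 / t k ^ 2, 0] : Matrix (Fin 2) (Fin 2) ℝ).PosSemidef := by
    refine Matrix.PosSemidef.diagonal fun i => ?_
    fin_cases i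
    · simp; positivity
    · simp
  simpa using hd.conjTranspose_mul_mul_same (partialTransfer t v E k)
end

section
/- Suppose M ∈ SL(2,ℝ), κ > 0, s ∈ {+1, −1} and E_c ∈ ℝ are such that M·T(E_c)·M⁻¹ = s·D_κ where D_κ = diag(κ, 1/κ), and suppose a, b, c ∈ ℝ satisfy M·T′(E_c)·M⁻¹ = s·(a·((0,−1),(1,0)) + b·((0,1),(1,0)) + c·((1,0),(0,−1)))·D_κ. Then a ≥ 0 and a² ≥ b² + c². -/
open Matrix

/-- The symplectic (wedge) form with the sign convention used below. -/
def wdg (p d : Fin 2 → ℝ) : ℝ := p 1 * d 0 - p 0 * d 1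

lemma wdg_mulVec (M : Matrix (Fin 2) (Fin 2) ℝ) (hM : M.det = 1) (p d : Fin 2 → ℝ) :
    wdg (M *ᵥ p) (M *ᵥ d) = wdg p d := by
  rw [Matrix.det_fin_two] at hM
  simp only [wdg, Matrix.mulVec, dotProduct, Fin.sum_univ_two]
  linear_combination (p 1 * d 0 - p 0 * d 1) * hM

lemma exists_deriv (t v : ℕ → ℝ) (Ec : ℝ) (L : ℕ) (ht : ∀ k < L, 0 < t k) :
    ∃ D : Matrix (Fin 2) (Fin 2) ℝ,
      (∀ i j, HasDerivAt (fun E : ℝ => partialTransfer t v E L i j) (D i j) Ec) ∧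
      ∀ w : Fin 2 → ℝ, wdg (partialTransfer t v Ec L *ᵥ w) (D *ᵥ w) ≤ 0 := by
  induction L with
  | zero =>
    refine ⟨0, fun i j => ?_, fun w => ?_⟩
    · simpa [partialTransfer] using hasDerivAt_const Ec ((1 : Matrix (Fin 2) (Fin 2) ℝ) i j)
    · simp [wdg]
  | succ k ih =>
    obtain ⟨D, hD, hw⟩ := ih (fun j hj => ht j (by omega))
    have htk : 0 < t k := ht k (by omega)
    set P := partialTransfer t v Ec k with hP
    have hx : HasDerivAt (fun E : ℝ => v k - E) (-1) Ec := by
      simpa using (hasDerivAt_id Ec).const_sub (v k)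
    refine ⟨siteTransfer (v k - Ec) (t k) * D + !![-1 / t k, 0; 0, 0] * P, fun i j => ?_,
      fun w => ?_⟩
    · have e0 := hD 0 j
      have e1 := hD 1 j
      fin_cases i
      · have := ((hx.mul e0).const_mul (1 / t k)).add (e1.const_mul (1 / t k * -t k ^ 2))
        refine (this.congr_deriv ?_).congr_of_eventuallyEq (.of_forall fun E => ?_)
        · simp [siteTransfer, Matrix.vecMul, dotProduct, Fin.sum_univ_two, ← hP]
          ring
        · simp [partialTransfer, siteTransfer, Matrix.mul_apply, Fin.sum_univ_two]
          ring
      · have := e0.const_mul (1 / t k)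
        refine (this.congr_deriv ?_).congr_of_eventuallyEq (.of_forall fun E => ?_)
        · simp [siteTransfer, Matrix.vecMul, dotProduct, Fin.sum_univ_two]
        · simp [partialTransfer, siteTransfer, Matrix.mul_apply, Fin.sum_univ_two]
    · have h := hw w
      have key : wdg (partialTransfer t v Ec (k + 1) *ᵥ w)
          ((siteTransfer (v k - Ec) (t k) * D + !![-1 / t k, 0; 0, 0] * P) *ᵥ w)
          = wdg (P *ᵥ w) (D *ᵥ w) - ((P *ᵥ w) 0 / t k) ^ 2 := by
        rw [partialTransfer, ← hP, Matrix.add_mulVec, ← Matrix.mulVec_mulVec,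
          ← Matrix.mulVec_mulVec, ← Matrix.mulVec_mulVec]
        generalize P *ᵥ w = p
        generalize D *ᵥ w = d
        simp [wdg, siteTransfer, Matrix.mulVec, dotProduct, Fin.sum_univ_two]
        field_simp
        ring
      rw [key]
      nlinarith [sq_nonneg ((P *ᵥ w) 0 / t k)]

/-- If `M ∈ SL(2,ℝ)` diagonalizes the transfer matrix at a critical energy,
`M·T(E_c)·M⁻¹ = s·D_κ` with `s = ±1`, `D_κ = diag(κ, 1/κ)`, and the derivative satisfies
`M·T′(E_c)·M⁻¹ = s·(a·((0,−1),(1,0)) + b·((0,1),(1,0)) + c·((1,0),(0,−1)))·D_κ`, then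
`a ≥ 0` and `a² ≥ b² + c²`. -/
theorem critical_energy_expansion_coefficients
    (L : ℕ) (t v : ℕ → ℝ) (ht : ∀ k < L, 0 < t k)
    (M : Matrix (Fin 2) (Fin 2) ℝ) (hM : M.det = 1)
    (κ : ℝ) (hκ : 0 < κ) (s : ℝ) (hs : s = 1 ∨ s = -1) (Ec : ℝ)
    (T' : Matrix (Fin 2) (Fin 2) ℝ)
    (hT' : ∀ i j : Fin 2,
      HasDerivAt (fun E : ℝ => partialTransfer t v E L i j) (T' i j) Ec)
    (a b c : ℝ)
    (h0 : M * partialTransfer t v Ec L * M⁻¹ = s • Matrix.diagonal ![κ, κ⁻¹])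
    (h1 : M * T' * M⁻¹ =
      s • ((a • (!![0, -1; 1, 0] : Matrix (Fin 2) (Fin 2) ℝ) +
            b • (!![0, 1; 1, 0] : Matrix (Fin 2) (Fin 2) ℝ) +
            c • (!![1, 0; 0, -1] : Matrix (Fin 2) (Fin 2) ℝ)) *
          Matrix.diagonal ![κ, κ⁻¹])) :
    0 ≤ a ∧ b ^ 2 + c ^ 2 ≤ a ^ 2 := by
  obtain ⟨D, hD, hw⟩ := exists_deriv t v Ec L ht
  have hDT : T' = D := by
    ext i j
    exact (hT' i j).unique (hD i j)
  subst hDT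
  have hss : s * s = 1 := by rcases hs with rfl | rfl <;> norm_num
  have hκ0 : κ ≠ 0 := hκ.ne'
  have hdd : (s • Matrix.diagonal ![κ, κ⁻¹]) * (s • Matrix.diagonal ![κ⁻¹, κ]) =
      (1 : Matrix (Fin 2) (Fin 2) ℝ) := by
    rw [Matrix.smul_mul, Matrix.mul_smul, smul_smul, hss, one_smul, Matrix.diagonal_mul_diagonal]
    ext i j
    fin_cases i <;> fin_cases j <;> simp [hκ0]
  have hq : ∀ y0 y1 : ℝ, 2 * c * y0 * y1 + (b - a) * y1 ^ 2 - (a + b) * y0 ^ 2 ≤ 0 := by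
    intro y0 y1
    have h := hw ((M⁻¹ * (s • Matrix.diagonal ![κ⁻¹, κ])) *ᵥ ![y0, y1])
    rw [← wdg_mulVec M hM, Matrix.mulVec_mulVec, Matrix.mulVec_mulVec, Matrix.mulVec_mulVec,
      Matrix.mulVec_mulVec, ← Matrix.mul_assoc, ← Matrix.mul_assoc,
      h0, h1, hdd, ← Matrix.mul_smul, Matrix.mul_assoc, hdd] at h
    simp [wdg, Matrix.mulVec, dotProduct, Fin.sum_univ_two] at h
    linarith
  have q1 := hq 1 0
  have q2 := hq 0 1
  have q3 := hq c (a + b)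
  have q4 := hq (a - b) c
  have q5 := hq 1 1
  have q6 := hq 1 (-1)
  have p1 : 0 ≤ a + b := by linarith
  have p2 : 0 ≤ a - b := by linarith
  refine ⟨by linarith, ?_⟩
  rcases p1.lt_or_eq with p | p
  · by_contra hn
    push Not at hn
    nlinarith [mul_pos p (sub_pos.2 hn)]
  rcases p2.lt_or_eq with p' | p'
  · by_contra hn
    push Not at hn
    nlinarith [mul_pos p' (sub_pos.2 hn)]
  have ha : a = 0 := by linarith
  have hb : b = 0 := by linarith
  subst ha hb
  have hc : c = 0 := by linarith
  simp [hc]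
end

section
/- There exists ε₀ ∈ (0,1), depending only on k, C1, C2, C3, such that for all ε ∈ (0, ε₀], all parameters a, b, α, β, γ, δ satisfying the stated bounds, and all x ∈ ℝ with Kε ≤ x ≤ (Kε)⁻¹, one has Q_ε·x ≤ k·x; consequently, for any κ > 0, κ²·(Q_ε·x) ≤ k·κ²·x. -/
/-- The Möbius map `Q_ε·x` of the perturbative Prüfer phase dynamics. -/
noncomputable def Qmob (ε a b α β γ δ x : ℝ) : ℝ :=
  ((1 + ε ^ 2 * α) * x + (a - b - ε * β) * ε) /
    (1 + ε ^ 2 * δ - (a + b + ε * γ) * ε * x)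

/-- There is `ε₀ ∈ (0,1)` depending only on `k, C1, C2, C3` such that for all
`ε ∈ (0,ε₀]`, all admissible parameters and all `x` with `Kε ≤ x ≤ (Kε)⁻¹`, one has
`Q_ε·x ≤ k·x`, and consequently `κ²·(Q_ε·x) ≤ k·κ²·x` for all `κ > 0`.
Here `K = 2C2(1−k⁻¹)⁻¹`. -/
theorem mobius_contraction_region_III (k C1 C2 C3 : ℝ)
    (hk : 1 < k) (hC1 : 0 < C1) (hC12 : C1 ≤ C2) :
    ∃ ε₀ : ℝ, ε₀ ∈ Set.Ioo (0 : ℝ) 1 ∧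
      ∀ ε ∈ Set.Ioc (0 : ℝ) ε₀, ∀ a b α β γ δ : ℝ,
        C1 ≤ a - |b| → a + |b| ≤ C2 →
        |α| ≤ C3 → |β| ≤ C3 → |γ| ≤ C3 → |δ| ≤ C3 →
        ∀ x : ℝ, 2 * C2 * (1 - k⁻¹)⁻¹ * ε ≤ x → x ≤ (2 * C2 * (1 - k⁻¹)⁻¹ * ε)⁻¹ →
          Qmob ε a b α β γ δ x ≤ k * x ∧
          ∀ κ : ℝ, 0 < κ → κ ^ 2 * Qmob ε a b α β γ δ x ≤ k * κ ^ 2 * x := by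
  obtain ⟨q, hq⟩ : ∃ q, q = 1 - k⁻¹ := ⟨_, rfl⟩
  have hk0 : 0 < k := by linarith
  have hC2 : 0 < C2 := by linarith
  have hkq : k * q = k - 1 := by rw [hq]; field_simp
  have hq0 : 0 < q := by
    by_contra h
    nlinarith
  obtain ⟨m, hm⟩ : ∃ m, m = q / (2 * C2) := ⟨_, rfl⟩
  have hm0 : 0 < m := by rw [hm]; positivity
  have hmC : C2 * m = q / 2 := by rw [hm]; field_simp
  have hK : 2 * C2 * (1 - k⁻¹)⁻¹ = m⁻¹ := by rw [← hq, hm]; field_simp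
  obtain ⟨C, hC⟩ : ∃ C, C = |C3| := ⟨_, rfl⟩
  have hCn : 0 ≤ C := by rw [hC]; positivity
  have hCC : C3 ≤ C := by rw [hC]; exact le_abs_self _
  have hM : 0 < (C + 1) * (1 + k) * (1 + m) := by positivity
  have hη : 0 < q * (k - 1) / 2 := by
    have : 0 < k - 1 := by linarith
    positivity
  refine ⟨min (1 / 2) (q * (k - 1) / 2 / ((C + 1) * (1 + k) * (1 + m))),
    ⟨lt_min (by norm_num) (div_pos hη hM), (min_le_left _ _).trans_lt (by norm_num)⟩, ?_⟩
  rintro ε ⟨hε, hε0⟩ a b α β γ δ h1 h2 hα hβ hγ hδ x hx1 hx2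
  have hε1 : ε ≤ 1 := (hε0.trans (min_le_left _ _)).trans (by norm_num)
  have hεM := (le_div_iff₀ hM).1 (hε0.trans (min_le_right _ _))
  rw [hK] at hx1 hx2
  have hx0 : 0 < x := lt_of_lt_of_le (by positivity) hx1
  have hεx : ε ≤ m * x := by
    have := mul_le_mul_of_nonneg_left hx1 hm0.le
    rwa [← mul_assoc, mul_inv_cancel₀ hm0.ne', one_mul] at this
  have hxε : ε * x ≤ m := by
    have := mul_le_mul_of_nonneg_left hx2 hε.le
    rwa [mul_inv, inv_inv, mul_comm m, ← mul_assoc, mul_inv_cancel₀ hε.ne', one_mul] at this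
  obtain ⟨s, hs⟩ : ∃ s, s = ε * C * (1 + m) := ⟨_, rfl⟩
  have hs0 : 0 ≤ s := by rw [hs]; positivity
  have hsk : (1 + k) * s ≤ q * (k - 1) / 2 := by
    have : 0 ≤ ε * (1 + k) * (1 + m) := by positivity
    rw [hs]; nlinarith
  have hkey : 1 + q / 2 + s ≤ k * (1 - q / 2 - s) := by linarith
  have hεε : ε ^ 2 ≤ ε := by nlinarith
  have hab1 : a - b ≤ C2 := by linarith [neg_abs_le b]
  have hab2 : a + b ≤ C2 := by linarith [le_abs_self b]
  have hα' : α ≤ C := (le_abs_self _).trans (hα.trans hCC)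
  have hβ' : -β ≤ C := (neg_le_abs _).trans (hβ.trans hCC)
  have hγ' : γ ≤ C := (le_abs_self _).trans (hγ.trans hCC)
  have hδ' : -δ ≤ C := (neg_le_abs _).trans (hδ.trans hCC)
  have hnum : (1 + ε ^ 2 * α) * x + (a - b - ε * β) * ε ≤ x * (1 + q / 2 + s) := by
    have e1 : ε ^ 2 * α * x ≤ ε * C * x := by
      have : ε ^ 2 * α ≤ ε * C :=
        (mul_le_mul_of_nonneg_left hα' (by positivity)).trans
          (mul_le_mul_of_nonneg_right hεε hCn)
      exact mul_le_mul_of_nonneg_right this hx0.le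
    have e2 : (a - b) * ε ≤ q / 2 * x := by
      rw [← hmC, mul_assoc]
      exact (mul_le_mul_of_nonneg_right hab1 hε.le).trans
        (mul_le_mul_of_nonneg_left hεx hC2.le)
    have e3 : ε * ε * (-β) ≤ ε * (m * x) * C :=
      (mul_le_mul_of_nonneg_left hβ' (by positivity)).trans
        (mul_le_mul_of_nonneg_right (mul_le_mul_of_nonneg_left hεx hε.le) hCn)
    rw [hs]; linarith
  have hden : 1 - q / 2 - s ≤ 1 + ε ^ 2 * δ - (a + b + ε * γ) * ε * x := by
    have e1 : ε ^ 2 * (-δ) ≤ ε * C :=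
      (mul_le_mul_of_nonneg_left hδ' (by positivity)).trans
        (mul_le_mul_of_nonneg_right hεε hCn)
    have e2 : (a + b) * (ε * x) ≤ q / 2 := by
      rw [← hmC]
      exact (mul_le_mul_of_nonneg_right hab2 (by positivity)).trans
        (mul_le_mul_of_nonneg_left hxε hC2.le)
    have e3 : ε * (ε * x) * γ ≤ ε * m * C :=
      (mul_le_mul_of_nonneg_left hγ' (by positivity)).trans
        (mul_le_mul_of_nonneg_right (mul_le_mul_of_nonneg_left hxε hε.le) hCn)
    rw [hs]; linarith
  have hd0 : 0 < 1 - q / 2 - s := by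
    have hpos : 0 < k * (1 - q / 2 - s) := by linarith
    exact (mul_pos_iff_of_pos_left hk0).1 hpos
  have hmain : Qmob ε a b α β γ δ x ≤ k * x := by
    unfold Qmob
    rw [div_le_iff₀ (hd0.trans_le hden)]
    calc _ ≤ x * (1 + q / 2 + s) := hnum
      _ ≤ x * (k * (1 - q / 2 - s)) := mul_le_mul_of_nonneg_left hkey hx0.le
      _ = k * x * (1 - q / 2 - s) := by ring
      _ ≤ _ := mul_le_mul_of_nonneg_left hden (by positivity)
  refine ⟨hmain, fun κ hκ => ?_⟩
  have := mul_le_mul_of_nonneg_left hmain (sq_nonneg κ)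
  linarith
end

section
/- There exists ε₀ ∈ (0,1), depending only on k, C1, C2, C3, such that for all ε ∈ (0, ε₀], all parameters a, b, α, β, γ, δ satisfying the stated bounds, and all κ > 0: if x > 0 and Q_ε·(κ²x) ≤ 0 then κ²x > (Kε)⁻¹. Equivalently, for every y with 0 < y ≤ (Kε)⁻¹ one has Q_ε·y > 0. -/
/-- There is `ε₀ ∈ (0,1)` depending only on `k, C1, C2, C3` such that for all
`ε ∈ (0,ε₀]` and all admissible parameters: if `x > 0` and `Q_ε·(κ²x) ≤ 0` then
`κ²x > (Kε)⁻¹`; equivalently, `Q_ε·y > 0` for every `y` with `0 < y ≤ (Kε)⁻¹`.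
Here `K = 2C2(1−k⁻¹)⁻¹`. -/
theorem region_I_entered_only_through_region_IV (k C1 C2 C3 : ℝ)
    (hk : 1 < k) (hC1 : 0 < C1) (hC12 : C1 ≤ C2) :
    ∃ ε₀ : ℝ, ε₀ ∈ Set.Ioo (0 : ℝ) 1 ∧
      ∀ ε ∈ Set.Ioc (0 : ℝ) ε₀, ∀ a b α β γ δ : ℝ,
        C1 ≤ a - |b| → a + |b| ≤ C2 →
        |α| ≤ C3 → |β| ≤ C3 → |γ| ≤ C3 → |δ| ≤ C3 →
        (∀ κ x : ℝ, 0 < κ → 0 < x → Qmob ε a b α β γ δ (κ ^ 2 * x) ≤ 0 →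
          (2 * C2 * (1 - k⁻¹)⁻¹ * ε)⁻¹ < κ ^ 2 * x) ∧
        (∀ y : ℝ, 0 < y → y ≤ (2 * C2 * (1 - k⁻¹)⁻¹ * ε)⁻¹ →
          0 < Qmob ε a b α β γ δ y) := by
  have hC2 : 0 < C2 := lt_of_lt_of_le hC1 hC12
  have hk0 : 0 < k⁻¹ := inv_pos.mpr (by linarith)
  have hk1 : k⁻¹ < 1 := inv_lt_one_of_one_lt₀ hk
  obtain ⟨s, hs⟩ : ∃ s, s = 1 - k⁻¹ := ⟨_, rfl⟩
  rw [← hs]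
  have hs0 : 0 < s := by linarith
  have hs1 : s < 1 := by linarith
  obtain ⟨M, hM⟩ : ∃ M, M = |C3| + 1 := ⟨_, rfl⟩
  have hM0 : 0 < M := by have := abs_nonneg C3; linarith
  have hCM : C3 ≤ M := by have := le_abs_self C3; linarith
  refine ⟨min (1 / 2) (min (C1 / (2 * M)) (1 / (4 * M))), ⟨by positivity, ?_⟩, ?_⟩
  · exact lt_of_le_of_lt (min_le_left _ _) (by norm_num)
  rintro ε ⟨hε, hε'⟩ a b α β γ δ h1 h2 hα hβ hγ hδ
  simp only [le_min_iff] at hε'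
  obtain ⟨he1, he2, he3⟩ := hε'
  rw [le_div_iff₀ (by positivity)] at he2 he3
  have key : ∀ c : ℝ, |c| ≤ C3 → -(ε * M) ≤ ε * c ∧ ε * c ≤ ε * M := by
    intro c hc
    obtain ⟨hc1, hc2⟩ := abs_le.mp (hc.trans hCM)
    constructor <;> nlinarith
  have key2 : ∀ c : ℝ, |c| ≤ C3 → -(1 / 4) ≤ ε ^ 2 * c := by
    intro c hc
    have := (key c hc).1
    have h : -(1 / 4) ≤ ε * c := by linarith
    have : ε ^ 2 * c = ε * (ε * c) := by ring
    rw [this]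
    nlinarith
  have hb1 := le_abs_self b
  have main : ∀ y : ℝ, 0 < y → y ≤ (2 * C2 * s⁻¹ * ε)⁻¹ →
      0 < Qmob ε a b α β γ δ y := by
    intro y hy hy'
    have hεy : 0 < ε * y := mul_pos hε hy
    have hy2 : C2 * (ε * y) ≤ s / 2 := by
      have h3 : C2 * (ε * y) ≤ C2 * (ε * (2 * C2 * s⁻¹ * ε)⁻¹) := by gcongr
      have h4 : C2 * (ε * (2 * C2 * s⁻¹ * ε)⁻¹) = s / 2 := by field_simp
      linarith
    unfold Qmob
    apply div_pos
    · have hA := key2 α hα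
      have hB := (key β hβ).2
      have : 0 < (1 + ε ^ 2 * α) * y := mul_pos (by linarith) hy
      have : 0 < (a - b - ε * β) * ε := mul_pos (by linarith) hε
      linarith
    · have hD := key2 δ hδ
      have hG := (key γ hγ).2
      have h5 : (a + b + ε * γ) * (ε * y) ≤ (3 / 2 * C2) * (ε * y) :=
        mul_le_mul_of_nonneg_right (by linarith) hεy.le
      have h6 : (a + b + ε * γ) * ε * y = (a + b + ε * γ) * (ε * y) := by ring
      rw [h6]
      linarith
  refine ⟨?_, main⟩
  intro κ x hκ hx hQ
  by_contra hcon
  exact absurd (main _ (by positivity) (not_lt.mp hcon)) (not_lt.mpr hQ)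
end

section
/- There exists ε₀ ∈ (0,1), depending only on k, C1, C2, C3, such that for all ε ∈ (0, ε₀], all parameters a, b, α, β, γ, δ satisfying the stated bounds, and all x ≤ 0, one has Q_ε·x < Kε. -/
/-- There is `ε₀ ∈ (0,1)` depending only on `k, C1, C2, C3` such that for all
`ε ∈ (0,ε₀]`, all admissible parameters and all `x ≤ 0`, one has `Q_ε·x < Kε`,
where `K = 2C2(1−k⁻¹)⁻¹`. -/
theorem exit_from_region_I_lands_in_region_II (k C1 C2 C3 : ℝ)
    (hk : 1 < k) (hC1 : 0 < C1) (hC12 : C1 ≤ C2) :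
    ∃ ε₀ : ℝ, ε₀ ∈ Set.Ioo (0 : ℝ) 1 ∧
      ∀ ε ∈ Set.Ioc (0 : ℝ) ε₀, ∀ a b α β γ δ : ℝ,
        C1 ≤ a - |b| → a + |b| ≤ C2 →
        |α| ≤ C3 → |β| ≤ C3 → |γ| ≤ C3 → |δ| ≤ C3 →
        ∀ x : ℝ, x ≤ 0 →
          Qmob ε a b α β γ δ x < 2 * C2 * (1 - k⁻¹)⁻¹ * ε := by
  set M : ℝ := |C3| + 1 with hM
  have hM1 : 1 ≤ M := by have := abs_nonneg C3; linarith
  have hM0 : 0 < M := by linarith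
  have hC3M : C3 ≤ M := by have := le_abs_self C3; linarith
  have hC2 : 0 < C2 := by linarith
  have hmin : 0 < min C1 1 := lt_min hC1 one_pos
  refine ⟨min C1 1 / (8 * M), ⟨by positivity, ?_⟩, ?_⟩
  · rw [div_lt_one (by positivity)]
    have := min_le_right C1 1
    linarith
  rintro ε ⟨hε, hε1⟩ a b α β γ δ h1 h2 hα hβ hγ hδ x hx
  rw [le_div_iff₀ (by positivity)] at hε1
  have hA : ε * M ≤ C1 / 8 := by have := min_le_left C1 1; linarith
  have hB : ε * M ≤ 1 / 8 := by have := min_le_right C1 1; linarith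
  have hε8 : ε ≤ 1 / 8 := by nlinarith
  have key : ∀ t : ℝ, |t| ≤ C3 → |ε * t| ≤ ε * M := by
    intro t ht
    rw [abs_mul, abs_of_pos hε]
    exact mul_le_mul_of_nonneg_left (ht.trans hC3M) hε.le
  have key2 : ∀ t : ℝ, |t| ≤ C3 → |ε ^ 2 * t| ≤ 1 / 8 := by
    intro t ht
    have h := key t ht
    rw [pow_two, mul_assoc, abs_mul, abs_of_pos hε]
    have := abs_nonneg (ε * t)
    nlinarith
  have kα := abs_le.mp (key2 α hα)
  have kδ := abs_le.mp (key2 δ hδ)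
  have kβ := abs_le.mp (key β hβ)
  have kγ := abs_le.mp (key γ hγ)
  have hb1 := le_abs_self b
  have hb2 := neg_abs_le b
  have hD : 7 / 8 ≤ 1 + ε ^ 2 * δ - (a + b + ε * γ) * ε * x := by
    have h : 0 ≤ (a + b + ε * γ) * ε * (-x) :=
      mul_nonneg (mul_nonneg (by linarith) hε.le) (by linarith)
    linarith
  have hN : (1 + ε ^ 2 * α) * x + (a - b - ε * β) * ε ≤ 9 / 8 * C2 * ε := by
    have h : 0 ≤ (1 + ε ^ 2 * α) * (-x) := mul_nonneg (by linarith) (by linarith)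
    have h' : (a - b - ε * β) * ε ≤ 9 / 8 * C2 * ε :=
      mul_le_mul_of_nonneg_right (by linarith) hε.le
    linarith
  have hK : 1 ≤ (1 - k⁻¹)⁻¹ := by
    have hk1 : k⁻¹ < 1 := inv_lt_one_of_one_lt₀ hk
    have hk0 : 0 < k⁻¹ := inv_pos.mpr (by linarith)
    exact (one_le_inv₀ (by linarith)).mpr (by linarith)
  have hP : 0 < C2 * ε := mul_pos hC2 hε
  have hKε : 2 * (C2 * ε) ≤ 2 * C2 * (1 - k⁻¹)⁻¹ * ε := by nlinarith
  unfold Qmob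
  rw [div_lt_iff₀ (by linarith)]
  have h3 : 2 * (C2 * ε) * (7 / 8) ≤ 2 * C2 * (1 - k⁻¹)⁻¹ * ε *
      (1 + ε ^ 2 * δ - (a + b + ε * γ) * ε * x) :=
    mul_le_mul hKε hD (by norm_num) (by linarith)
  linarith
end

section
/- There exists ε₀ ∈ (0,1), depending only on k, C1, C2, C3, such that for all ε ∈ (0, ε₀], all parameters a, b, α, β, γ, δ satisfying the stated bounds, and all x with 0 < x < Kε, one has 0 < Q_ε·x < 2Kε. Consequently, if κ > 0 satisfies κ ≤ C4, then κ²·(Q_ε·x) < 2C4²Kε; in particular, if κ²·(Q_ε·x) ≥ Kε, then κ²·(Q_ε·x) lies in [Kε, 2C4²Kε). -/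
/-- There is `ε₀ ∈ (0,1)` depending only on `k, C1, C2, C3` such that for all
`ε ∈ (0,ε₀]`, all admissible parameters and all `x` with `0 < x < Kε`, one has
`0 < Q_ε·x < 2Kε`; consequently, if `0 < κ ≤ C4` then `κ²·(Q_ε·x) < 2C4²Kε`, and if moreover
`κ²·(Q_ε·x) ≥ Kε` then `κ²·(Q_ε·x) ∈ [Kε, 2C4²Kε)`. Here `K = 2C2(1−k⁻¹)⁻¹`. -/
theorem no_large_forward_jump_from_region_II (k C1 C2 C3 C4 : ℝ)
    (hk : 1 < k) (hC1 : 0 < C1) (hC12 : C1 ≤ C2) (hC4 : 0 < C4) :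
    ∃ ε₀ : ℝ, ε₀ ∈ Set.Ioo (0 : ℝ) 1 ∧
      ∀ ε ∈ Set.Ioc (0 : ℝ) ε₀, ∀ a b α β γ δ : ℝ,
        C1 ≤ a - |b| → a + |b| ≤ C2 →
        |α| ≤ C3 → |β| ≤ C3 → |γ| ≤ C3 → |δ| ≤ C3 →
        ∀ x : ℝ, 0 < x → x < 2 * C2 * (1 - k⁻¹)⁻¹ * ε →
          (0 < Qmob ε a b α β γ δ x ∧
            Qmob ε a b α β γ δ x < 2 * (2 * C2 * (1 - k⁻¹)⁻¹) * ε) ∧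
          ∀ κ : ℝ, 0 < κ → κ ≤ C4 →
            κ ^ 2 * Qmob ε a b α β γ δ x < 2 * C4 ^ 2 * (2 * C2 * (1 - k⁻¹)⁻¹) * ε ∧
            (2 * C2 * (1 - k⁻¹)⁻¹ * ε ≤ κ ^ 2 * Qmob ε a b α β γ δ x →
              κ ^ 2 * Qmob ε a b α β γ δ x ∈
                Set.Ico (2 * C2 * (1 - k⁻¹)⁻¹ * ε)
                  (2 * C4 ^ 2 * (2 * C2 * (1 - k⁻¹)⁻¹) * ε)) := by
  have hkinv : 0 < k⁻¹ := by positivity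
  have hkinv1 : k⁻¹ < 1 := inv_lt_one_of_one_lt₀ hk
  have hone : 1 ≤ (1 - k⁻¹)⁻¹ := (one_le_inv₀ (by linarith)).2 (by linarith)
  have hK2 : 2 * C2 ≤ 2 * C2 * (1 - k⁻¹)⁻¹ := by nlinarith
  generalize 2 * C2 * (1 - k⁻¹)⁻¹ = K at *
  have hC2 : 0 < C2 := by linarith
  have hK : 0 < K := by linarith
  set c := |C3| with hc
  have hc0 : 0 ≤ c := abs_nonneg _
  have hcc : C3 ≤ c := le_abs_self _
  set S := 1 + c + K * (C2 + c) with hS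
  have hS1 : 1 ≤ S := by
    have : 0 ≤ K * (C2 + c) := by positivity
    linarith
  have hm0 : 0 < min 1 C1 := lt_min one_pos hC1
  have hm1 : min 1 C1 ≤ 1 := min_le_left _ _
  have hm2 : min 1 C1 ≤ C1 := min_le_right _ _
  generalize min 1 C1 = m at *
  refine ⟨m / (20 * S), ⟨by positivity, ?_⟩, ?_⟩
  · rw [div_lt_one (by positivity)]; linarith
  rintro ε ⟨he, hle⟩ a b α β γ δ hab hab2 hα hβ hγ hδ x hx hxK
  rw [le_div_iff₀ (by positivity)] at hle
  have hKC : 0 ≤ ε * (K * (C2 + c)) := by positivity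
  have hec : 0 ≤ ε * c := by positivity
  have hexp : ε + ε * c + ε * (K * (C2 + c)) ≤ m / 20 := by rw [hS] at hle; linarith
  have h1 : ε ≤ 1 / 20 := by linarith
  have hsm : ∀ t : ℝ, |t| ≤ C3 → |ε * t| ≤ m / 20 := by
    intro t ht
    rw [abs_mul, abs_of_pos he]
    have : ε * |t| ≤ ε * c := mul_le_mul_of_nonneg_left (ht.trans hcc) he.le
    linarith
  have hsm2 : ∀ t : ℝ, |t| ≤ C3 → |ε ^ 2 * t| ≤ 1 / 400 := by
    intro t ht
    have h := hsm t ht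
    have : ε ^ 2 * t = ε * (ε * t) := by ring
    rw [this, abs_mul, abs_of_pos he]
    calc ε * |ε * t| ≤ (1 / 20) * (1 / 20) :=
          mul_le_mul h1 (by linarith) (abs_nonneg _) (by norm_num)
      _ = 1 / 400 := by norm_num
  obtain ⟨a1, a2⟩ := abs_le.1 (hsm2 α hα)
  obtain ⟨d1, d2⟩ := abs_le.1 (hsm2 δ hδ)
  obtain ⟨b1, b2⟩ := abs_le.1 (hsm β hβ)
  obtain ⟨g1, g2⟩ := abs_le.1 (hsm γ hγ)
  have hb1 := le_abs_self b
  have hb2 := neg_abs_le b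
  have hγc : ε * γ ≤ c := by
    have hg := (le_abs_self γ).trans (hγ.trans hcc)
    have : ε * γ ≤ ε * c := mul_le_mul_of_nonneg_left hg he.le
    have : ε * c ≤ 1 * c := mul_le_mul_of_nonneg_right (by linarith) hc0
    linarith
  have hcross : (a + b + ε * γ) * ε * x ≤ 1 / 400 := by
    have e1 : (a + b + ε * γ) * (ε * x) ≤ (C2 + c) * (ε * (K * ε)) := by
      apply mul_le_mul (by linarith) (mul_le_mul_of_nonneg_left hxK.le he.le)
        (by positivity) (by positivity)
    have e2 : (C2 + c) * (ε * (K * ε)) = (ε * (K * (C2 + c))) * ε := by ring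
    have e3 : (ε * (K * (C2 + c))) * ε ≤ (1 / 20) * (1 / 20) :=
      mul_le_mul (by linarith) h1 he.le (by norm_num)
    linarith [mul_assoc (a + b + ε * γ) ε x]
  have hden : 9 / 10 ≤ 1 + ε ^ 2 * δ - (a + b + ε * γ) * ε * x := by linarith
  have hQ0 : 0 < Qmob ε a b α β γ δ x := by
    unfold Qmob
    apply div_pos _ (by linarith)
    have : 0 < (1 + ε ^ 2 * α) * x := mul_pos (by linarith) hx
    have : 0 < (a - b - ε * β) * ε := mul_pos (by linarith) he
    linarith
  have hQ1 : Qmob ε a b α β γ δ x < 2 * K * ε := by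
    unfold Qmob
    rw [div_lt_iff₀ (by linarith)]
    have hKe : 0 < K * ε := by positivity
    have n1 : (1 + ε ^ 2 * α) * x ≤ (401 / 400) * (K * ε) :=
      mul_le_mul (by linarith) hxK.le hx.le (by norm_num)
    have n2 : (a - b - ε * β) * ε ≤ (6 / 10 * K) * ε :=
      mul_le_mul_of_nonneg_right (by linarith) he.le
    have n3 : 2 * K * ε * (9 / 10) ≤
        2 * K * ε * (1 + ε ^ 2 * δ - (a + b + ε * γ) * ε * x) :=
      mul_le_mul_of_nonneg_left hden (by positivity)
    linarith
  refine ⟨⟨hQ0, hQ1⟩, ?_⟩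
  intro κ hκ hκ4
  have hfin : κ ^ 2 * Qmob ε a b α β γ δ x < 2 * C4 ^ 2 * K * ε := by
    have hsq : κ ^ 2 ≤ C4 ^ 2 := pow_le_pow_left₀ hκ.le hκ4 2
    calc κ ^ 2 * Qmob ε a b α β γ δ x ≤ C4 ^ 2 * Qmob ε a b α β γ δ x :=
          mul_le_mul_of_nonneg_right hsq hQ0.le
      _ < C4 ^ 2 * (2 * K * ε) := mul_lt_mul_of_pos_left hQ1 (by positivity)
      _ = 2 * C4 ^ 2 * K * ε := by ring
  exact ⟨hfin, fun h => ⟨h, hfin⟩⟩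
end

section
/- Let κ be a positive random variable whose distribution has compact support in (0,∞), with P(κ ≠ 1) > 0, and let ν > 0 satisfy E[κ^ν] = 1 (so that E[log κ] < 0). Then for every k with 1 < k < exp(−2·E[log κ]) there exists a unique ϱ_k ∈ (0, ν/2) such that E[(k κ²)^{ϱ_k}] = 1. -/
open MeasureTheory

/-- For a positive random variable `κ` with compactly supported distribution in
`(0,∞)`, `P(κ ≠ 1) > 0` and `E[κ^ν] = 1` for some `ν > 0`, every `k` with
`1 < k < exp(−2·E[log κ])` admits a unique `ϱ_k ∈ (0, ν/2)` with `E[(k κ²)^{ϱ_k}] = 1`. -/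
theorem unique_rho_k
    {Ω : Type*} [MeasurableSpace Ω] (P : Measure Ω) [IsProbabilityMeasure P]
    (κ : Ω → ℝ) (hmeas : Measurable κ)
    (hsupp : ∃ m M : ℝ, 0 < m ∧ m ≤ M ∧ ∀ᵐ ω ∂P, m ≤ κ ω ∧ κ ω ≤ M)
    (hne : 0 < P {ω | κ ω ≠ 1})
    (ν : ℝ) (hν : 0 < ν) (hν1 : ∫ ω, κ ω ^ ν ∂P = 1)
    (k : ℝ) (hk : 1 < k) (hk2 : k < Real.exp (-2 * ∫ ω, Real.log (κ ω) ∂P)) :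
    ∃! ϱ : ℝ, ϱ ∈ Set.Ioo 0 (ν / 2) ∧ ∫ ω, (k * κ ω ^ 2) ^ ϱ ∂P = 1 := by
  obtain ⟨m, M, hm, hmM, hb⟩ := hsupp
  have hk0 : 0 < k := by linarith
  have hlk : Real.log k < -2 * ∫ ω, Real.log (κ ω) ∂P := (Real.log_lt_iff_lt_exp hk0).2 hk2
  set X : Ω → ℝ := fun ω => Real.log k + 2 * Real.log (κ ω) with hX
  have hLm : Measurable (fun ω => Real.log (κ ω)) := Real.measurable_log.comp hmeas
  have hXm : Measurable X := by fun_prop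
  have hLb : ∀ᵐ ω ∂P, Real.log (κ ω) ∈ Set.Icc (Real.log m) (Real.log M) := by
    filter_upwards [hb] with ω h
    exact ⟨Real.log_le_log hm h.1, Real.log_le_log (by linarith) h.2⟩
  have hLi : Integrable (fun ω => Real.log (κ ω)) P :=
    Integrable.of_mem_Icc _ _ hLm.aemeasurable hLb
  have hXi : Integrable X P := (integrable_const _).add (hLi.const_mul 2)
  have hEX : ∫ ω, X ω ∂P < 0 := by
    rw [hX, integral_add (integrable_const _) (hLi.const_mul 2), integral_const_mul]
    simp; linarith
  have hXb : ∀ᵐ ω ∂P, X ω ∈ Set.Icc (Real.log k + 2 * Real.log m) (Real.log k + 2 * Real.log M) := by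
    filter_upwards [hLb] with ω h
    constructor <;> simp only [hX] <;> linarith [h.1, h.2]
  have hei : ∀ t : ℝ, Integrable (fun ω => Real.exp (t * X ω)) P := fun t =>
    ProbabilityTheory.integrable_exp_mul_of_mem_Icc hXm.aemeasurable hXb
  have hset : ProbabilityTheory.integrableExpSet X P = Set.univ := by
    ext t; simpa [ProbabilityTheory.integrableExpSet] using hei t
  have hfe : ∀ t : ℝ, ∫ ω, (k * κ ω ^ 2) ^ t ∂P = ProbabilityTheory.mgf X P t := by
    intro t
    refine integral_congr_ae ?_
    filter_upwards [hb] with ω h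
    have h0 : 0 < κ ω := by linarith [h.1]
    simp only [hX]
    rw [Real.rpow_def_of_pos (by positivity), Real.log_mul hk0.ne' (by positivity), Real.log_pow,
      mul_comm t]
    norm_num
  simp only [hfe]
  set f := ProbabilityTheory.mgf X P with hf
  have hf0 : f 0 = 1 := by simp [hf]
  have hcont : Continuous f := by
    rw [← continuousOn_univ]
    simpa [hset] using ProbabilityTheory.continuousOn_mgf (X := X) (μ := P)
  have hder : HasDerivAt f (∫ ω, X ω ∂P) 0 := by
    have := ProbabilityTheory.hasDerivAt_mgf (X := X) (μ := P) (t := 0) (by simp [hset])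
    simpa using this
  have hfν : 1 < f (ν / 2) := by
    have : f (ν / 2) = k ^ (ν / 2) * 1 := by
      rw [← hfe, ← hν1, ← integral_const_mul]
      refine integral_congr_ae ?_
      filter_upwards [hb] with ω h
      have h0 : 0 < κ ω := by linarith [h.1]
      rw [Real.mul_rpow hk0.le (by positivity), ← Real.rpow_natCast, ← Real.rpow_mul h0.le]
      congr 2
      push_cast; ring
    rw [this, mul_one]
    exact Real.one_lt_rpow hk (by positivity)
  obtain ⟨s, hs0, hsν, hfs⟩ : ∃ s, 0 < s ∧ s < ν / 2 ∧ f s < 1 := by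
    have h1 := (hasDerivAt_iff_tendsto_slope_zero.1 hder).mono_left
      (nhdsWithin_mono 0 (t := {0}ᶜ) (s := Set.Ioi 0) (fun x hx => ne_of_gt hx))
    have h2 := (h1.eventually_lt_const hEX).and
      (Ioo_mem_nhdsGT (show (0:ℝ) < ν / 2 by positivity))
    obtain ⟨s, hs, hs'⟩ := h2.exists
    refine ⟨s, hs'.1, hs'.2, ?_⟩
    simp only [zero_add, hf0, smul_eq_mul] at hs
    have := (inv_pos.2 hs'.1)
    by_contra hc
    push Not at hc
    nlinarith [mul_nonneg this.le (sub_nonneg.2 hc)]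
  have key : ∀ a b : ℝ, 0 < a → a < b → f a = 1 → f b = 1 → False := by
    intro a b ha hab hfa hfb
    have hb0 : 0 < b := ha.trans hab
    have hlt : ∀ x : ℝ, x ≠ 0 → Real.exp (a * x) < (1 - a / b) + a / b * Real.exp (b * x) := by
      intro x hx
      have := strictConvexOn_exp.2 (Set.mem_univ 0) (Set.mem_univ (b * x))
        (mul_ne_zero hb0.ne' hx).symm
        (show 0 < 1 - a / b by rw [sub_pos, div_lt_one hb0]; exact hab)
        (show 0 < a / b by positivity) (by ring)
      simp only [smul_eq_mul, mul_zero, zero_add, Real.exp_zero, mul_one] at this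
      rwa [← mul_assoc, div_mul_cancel₀ _ hb0.ne'] at this
    have hle : ∀ x : ℝ, Real.exp (a * x) ≤ (1 - a / b) + a / b * Real.exp (b * x) := by
      intro x
      rcases eq_or_ne x 0 with rfl | hx
      · simp
      · exact (hlt x hx).le
    have hgi : Integrable (fun ω => (1 - a / b) + a / b * Real.exp (b * X ω)) P :=
      (integrable_const _).add ((hei b).const_mul _)
    have hint : ∫ ω, (((1 - a / b) + a / b * Real.exp (b * X ω)) - Real.exp (a * X ω)) ∂P = 0 := by
      rw [integral_sub hgi (hei a), integral_add (integrable_const _) ((hei b).const_mul _),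
        integral_const_mul]
      change _ + a / b * f b - f a = 0
      rw [hfa, hfb]; simp
    rw [integral_eq_zero_iff_of_nonneg (fun ω => sub_nonneg.2 (hle _)) (hgi.sub (hei a))] at hint
    have : ∫ ω, X ω ∂P = 0 := by
      apply integral_eq_zero_of_ae
      filter_upwards [hint] with ω h
      by_contra hx
      have := hlt _ hx
      simp only [Pi.zero_apply] at h
      linarith
    linarith
  obtain ⟨r, hr, hfr⟩ := intermediate_value_Ioo hsν.le hcont.continuousOn ⟨hfs, hfν⟩
  refine ⟨r, ⟨⟨hs0.trans hr.1, hr.2⟩, hfr⟩, ?_⟩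
  rintro t ⟨⟨ht0, _⟩, hft⟩
  rcases lt_trichotomy t r with h | h | h
  · exact (key t r ht0 h hft hfr).elim
  · exact h
  · exact (key r t (hs0.trans hr.1) h hfr hft).elim
end

section
/- Let κ be a positive random variable whose distribution has compact support in (0,∞), with P(κ ≠ 1) > 0, and let ν > 0 satisfy E[κ^ν] = 1. For each k with 1 < k < exp(−2·E[log κ]) let ϱ_k be the unique number in (0, ν/2) with E[(k κ²)^{ϱ_k}] = 1. Then k ↦ ϱ_k is continuous on this interval and lim_{k→1⁺} ϱ_k = ν/2. -/
open MeasureTheory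

theorem aux_not_const {Ω : Type*} [MeasurableSpace Ω] (P : Measure Ω) [IsProbabilityMeasure P]
    (κ : Ω → ℝ) (hne : 0 < P {ω | κ ω ≠ 1})
    (hpos : ∀ᵐ ω ∂P, 0 < κ ω)
    (ν : ℝ) (hν : 0 < ν) (hν1 : ∫ ω, κ ω ^ ν ∂P = 1) (c : ℝ) (h : ∀ᵐ ω ∂P, κ ω = c) : False := by
  have h1 : ∫ ω, κ ω ^ ν ∂P = c ^ ν := by
    have : ∫ ω, κ ω ^ ν ∂P = ∫ ω, c ^ ν ∂P := by
      apply integral_congr_ae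
      filter_upwards [h] with ω hω
      rw [hω]
    rw [this]; simp
  obtain ⟨ω, h2, h3⟩ := (hpos.and h).exists
  rw [h3] at h2
  have hc : c = 1 := by
    have h4 : c ^ ν = (1 : ℝ) ^ ν := by rw [← h1, hν1, Real.one_rpow]
    exact (Real.rpow_left_inj h2.le zero_le_one hν.ne').1 h4
  subst hc
  have : P {ω | κ ω ≠ 1} = 0 := by simpa [ae_iff] using h
  exact hne.ne' this

theorem aux_int {Ω : Type*} [MeasurableSpace Ω] (P : Measure Ω) [IsProbabilityMeasure P]
    (κ : Ω → ℝ) (hmeas : Measurable κ) (m M : ℝ) (hm : 0 < m)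
    (hb : ∀ᵐ ω ∂P, m ≤ κ ω ∧ κ ω ≤ M) (s : ℝ) (hs : 0 < s) :
    Integrable (fun ω => κ ω ^ s) P := by
  refine Integrable.of_bound (hmeas.pow_const s).aestronglyMeasurable (M ^ s) ?_
  filter_upwards [hb] with ω hω
  have : 0 < κ ω := hm.trans_le hω.1
  rw [Real.norm_of_nonneg (by positivity)]
  exact Real.rpow_le_rpow this.le hω.2 hs.le

theorem aux_log_int {Ω : Type*} [MeasurableSpace Ω] (P : Measure Ω) [IsProbabilityMeasure P]
    (κ : Ω → ℝ) (hmeas : Measurable κ) (m M : ℝ) (hm : 0 < m)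
    (hb : ∀ᵐ ω ∂P, m ≤ κ ω ∧ κ ω ≤ M) :
    Integrable (fun ω => Real.log (κ ω)) P := by
  refine Integrable.of_bound hmeas.log.aestronglyMeasurable
    (max |Real.log m| |Real.log M|) ?_
  filter_upwards [hb] with ω hω
  have h0 : 0 < κ ω := hm.trans_le hω.1
  exact abs_le_max_abs_abs (Real.log_le_log hm hω.1) (Real.log_le_log h0 hω.2)

theorem aux_jensen {Ω : Type*} [MeasurableSpace Ω] (P : Measure Ω) [IsProbabilityMeasure P]
    (κ : Ω → ℝ) (hmeas : Measurable κ) (m M : ℝ) (hm : 0 < m)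
    (hb : ∀ᵐ ω ∂P, m ≤ κ ω ∧ κ ω ≤ M)
    (hnc : ∀ c : ℝ, ¬ ∀ᵐ ω ∂P, κ ω = c) (s t : ℝ) (hs : 0 < s) (hst : s < t) :
    (∫ ω, κ ω ^ s ∂P) ^ (t / s) < ∫ ω, κ ω ^ t ∂P := by
  have hp : 1 < t / s := (one_lt_div hs).2 hst
  have hcomp : ∀ᵐ ω ∂P, (κ ω ^ s) ^ (t / s) = κ ω ^ t := by
    filter_upwards [hb] with ω hω
    rw [← Real.rpow_mul (hm.trans_le hω.1).le, mul_div_cancel₀ _ hs.ne']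
  have key := (strictConvexOn_rpow hp).ae_eq_const_or_map_average_lt (μ := P)
    (f := fun ω => κ ω ^ s)
    (Real.continuous_rpow_const (by linarith)).continuousOn isClosed_Ici
    (by filter_upwards [hb] with ω hω
        exact Real.rpow_nonneg (hm.trans_le hω.1).le s)
    (aux_int P κ hmeas m M hm hb s hs)
    ((aux_int P κ hmeas m M hm hb t (hs.trans hst)).congr
      (by filter_upwards [hcomp] with ω hω
          exact hω.symm))
  rcases key with h | h
  · exfalso
    apply hnc ((⨍ ω, κ ω ^ s ∂P) ^ s⁻¹)
    filter_upwards [h, hb] with ω hω hb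
    simp only [Function.const_apply] at hω
    rw [← hω, Real.rpow_rpow_inv (hm.trans_le hb.1).le hs.ne']
  · rw [average_eq_integral, average_eq_integral, integral_congr_ae hcomp] at h
    exact h

theorem aux_log {Ω : Type*} [MeasurableSpace Ω] (P : Measure Ω) [IsProbabilityMeasure P]
    (κ : Ω → ℝ) (hmeas : Measurable κ) (m M : ℝ) (hm : 0 < m)
    (hb : ∀ᵐ ω ∂P, m ≤ κ ω ∧ κ ω ≤ M)
    (hnc : ∀ c : ℝ, ¬ ∀ᵐ ω ∂P, κ ω = c) (ν : ℝ) (hν : 0 < ν) (hν1 : ∫ ω, κ ω ^ ν ∂P = 1) :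
    ∫ ω, Real.log (κ ω) ∂P < 0 := by
  have hcomp : ∀ᵐ ω ∂P, Real.exp (Real.log (κ ω) * ν) = κ ω ^ ν := by
    filter_upwards [hb] with ω hω
    rw [Real.rpow_def_of_pos (hm.trans_le hω.1)]
  have key := strictConvexOn_exp.ae_eq_const_or_map_average_lt (μ := P)
    (f := fun ω => Real.log (κ ω) * ν)
    Real.continuous_exp.continuousOn isClosed_univ (by simp)
    ((aux_log_int P κ hmeas m M hm hb).mul_const ν)
    ((aux_int P κ hmeas m M hm hb ν hν).congr
      (by filter_upwards [hcomp] with ω hω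
          exact hω.symm))
  rcases key with h | h
  · exfalso
    apply hnc (Real.exp ((⨍ ω, Real.log (κ ω) * ν ∂P) / ν))
    filter_upwards [h, hb] with ω hω hb
    simp only [Function.const_apply] at hω
    rw [← hω, mul_div_cancel_right₀ _ hν.ne', Real.exp_log (hm.trans_le hb.1)]
  · rw [average_eq_integral, average_eq_integral, integral_congr_ae hcomp, hν1,
      Real.exp_lt_one_iff, integral_mul_const] at h
    by_contra hc
    push Not at hc
    have := mul_nonneg hc hν.le
    linarith

/-- Given a positive random variable `κ` with compactly supported distribution in
`(0,∞)`, `P(κ ≠ 1) > 0` and `E[κ^ν] = 1` with `ν > 0`, if for each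
`k ∈ (1, exp(−2·E[log κ]))` the number `ϱ k` lies in `(0, ν/2)` and satisfies
`E[(k κ²)^{ϱ k}] = 1`, then `k ↦ ϱ k` is continuous on this interval and `ϱ k → ν/2` as
`k → 1⁺`. -/
theorem rho_k_continuous_and_tendsto
    {Ω : Type*} [MeasurableSpace Ω] (P : Measure Ω) [IsProbabilityMeasure P]
    (κ : Ω → ℝ) (hmeas : Measurable κ)
    (hsupp : ∃ m M : ℝ, 0 < m ∧ m ≤ M ∧ ∀ᵐ ω ∂P, m ≤ κ ω ∧ κ ω ≤ M)
    (hne : 0 < P {ω | κ ω ≠ 1})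
    (ν : ℝ) (hν : 0 < ν) (hν1 : ∫ ω, κ ω ^ ν ∂P = 1)
    (ϱ : ℝ → ℝ)
    (hϱ : ∀ k ∈ Set.Ioo 1 (Real.exp (-2 * ∫ ω, Real.log (κ ω) ∂P)),
      ϱ k ∈ Set.Ioo 0 (ν / 2) ∧ ∫ ω, (k * κ ω ^ 2) ^ ϱ k ∂P = 1) :
    ContinuousOn ϱ (Set.Ioo 1 (Real.exp (-2 * ∫ ω, Real.log (κ ω) ∂P))) ∧
    Filter.Tendsto ϱ (nhdsWithin 1 (Set.Ioi 1)) (nhds (ν / 2)) := by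
  obtain ⟨m, M, hm, -, hb⟩ := hsupp
  have hpos : ∀ᵐ ω ∂P, 0 < κ ω := by
    filter_upwards [hb] with ω hω
    exact hm.trans_le hω.1
  have hnc : ∀ c : ℝ, ¬ ∀ᵐ ω ∂P, κ ω = c := fun c h =>
    aux_not_const P κ hne hpos ν hν hν1 c h
  have hApos : ∀ s : ℝ, 0 < s → 0 < ∫ ω, κ ω ^ s ∂P := by
    intro s hs
    have h1 : ∫ ω, m ^ s ∂P ≤ ∫ ω, κ ω ^ s ∂P := by
      apply integral_mono_ae (integrable_const _) (aux_int P κ hmeas m M hm hb s hs)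
      filter_upwards [hb] with ω hω
      exact Real.rpow_le_rpow hm.le hω.1 hs.le
    have h2 : 0 < m ^ s := Real.rpow_pos_of_pos hm s
    simp at h1
    linarith
  set h : ℝ → ℝ := fun r => (∫ ω, κ ω ^ (2 * r) ∂P) ^ (-(1 / r)) with hh
  have hanti : ∀ r q : ℝ, 0 < r → r < q → h q < h r := by
    intro r q hr hrq
    have hq := hr.trans hrq
    have hj := aux_jensen P κ hmeas m M hm hb hnc (2 * r) (2 * q) (by linarith) (by linarith)
    have hA := hApos (2 * r) (by linarith)
    have := Real.rpow_lt_rpow_of_neg (Real.rpow_pos_of_pos hA _) hj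
      (show -(1 / q) < 0 by
        have : 0 < 1 / q := by positivity
        linarith)
    rw [← Real.rpow_mul hA.le] at this
    have he : 2 * q / (2 * r) * -(1 / q) = -(1 / r) := by field_simp
    rw [he] at this
    exact this
  have hν2 : h (ν / 2) = 1 := by
    simp only [hh]
    rw [mul_div_cancel₀ _ two_ne_zero, hν1, Real.one_rpow]
  have hk : ∀ k ∈ Set.Ioo 1 (Real.exp (-2 * ∫ ω, Real.log (κ ω) ∂P)), h (ϱ k) = k := by
    intro k hkm
    obtain ⟨⟨hr, -⟩, hi⟩ := hϱ k hkm
    have hk0 : 0 < k := zero_lt_one.trans hkm.1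
    have hA := hApos (2 * ϱ k) (by linarith)
    have e : ∫ ω, (k * κ ω ^ 2) ^ ϱ k ∂P = k ^ ϱ k * ∫ ω, κ ω ^ (2 * ϱ k) ∂P := by
      rw [← integral_const_mul]
      apply integral_congr_ae
      filter_upwards [hpos] with ω hω
      rw [Real.mul_rpow hk0.le (by positivity), Real.rpow_mul hω.le, Real.rpow_two]
    rw [e] at hi
    have hA2 : ∫ ω, κ ω ^ (2 * ϱ k) ∂P = (k ^ ϱ k)⁻¹ := eq_inv_of_mul_eq_one_right hi
    simp only [hh]
    rw [hA2, ← Real.rpow_neg hk0.le, ← Real.rpow_mul hk0.le]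
    have : -ϱ k * -(1 / ϱ k) = 1 := by field_simp
    rw [this, Real.rpow_one]
  have hlow : ∀ k ∈ Set.Ioo 1 (Real.exp (-2 * ∫ ω, Real.log (κ ω) ∂P)), ∀ a : ℝ,
      k < h a → a < ϱ k := by
    intro k hkm a hka
    by_contra hc
    push Not at hc
    rcases hc.eq_or_lt with hc | hc
    · rw [← hc, hk k hkm] at hka
      exact lt_irrefl _ hka
    · have := hanti _ _ (hϱ k hkm).1.1 hc
      rw [hk k hkm] at this
      linarith
  have hup : ∀ k ∈ Set.Ioo 1 (Real.exp (-2 * ∫ ω, Real.log (κ ω) ∂P)), ∀ b : ℝ, 0 < b →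
      h b < k → ϱ k < b := by
    intro k hkm b hb0 hkb
    by_contra hc
    push Not at hc
    rcases hc.eq_or_lt with hc | hc
    · rw [hc, hk k hkm] at hkb
      exact lt_irrefl _ hkb
    · have := hanti _ _ hb0 hc
      rw [hk k hkm] at this
      linarith
  constructor
  · intro k₀ hk₀
    have hr := (hϱ k₀ hk₀).1
    refine tendsto_order.2 ⟨fun a ha => ?_, fun b hb' => ?_⟩
    · have hlt : max a (ϱ k₀ / 2) < ϱ k₀ := max_lt ha (by linarith [hr.1])
      have h0 : 0 < max a (ϱ k₀ / 2) := lt_max_of_lt_right (by linarith [hr.1])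
      have h1 := hanti _ _ h0 hlt
      rw [hk k₀ hk₀] at h1
      filter_upwards [self_mem_nhdsWithin, mem_nhdsWithin_of_mem_nhds (Iio_mem_nhds h1)]
        with k hkm hk1
      exact (le_max_left _ _).trans_lt (hlow k hkm _ hk1)
    · have h1 := hanti _ _ hr.1 hb'
      rw [hk k₀ hk₀] at h1
      filter_upwards [self_mem_nhdsWithin, mem_nhdsWithin_of_mem_nhds (Ioi_mem_nhds h1)]
        with k hkm hk1
      exact hup k hkm _ (hr.1.trans hb') hk1
  · have hlog := aux_log P κ hmeas m M hm hb hnc ν hν hν1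
    have hE : 1 < Real.exp (-2 * ∫ ω, Real.log (κ ω) ∂P) := Real.one_lt_exp_iff.2 (by linarith)
    have hmem : Set.Ioo 1 (Real.exp (-2 * ∫ ω, Real.log (κ ω) ∂P)) ∈
        nhdsWithin (1 : ℝ) (Set.Ioi 1) := Ioo_mem_nhdsGT hE
    refine tendsto_order.2 ⟨fun a ha => ?_, fun b hb' => ?_⟩
    · have hlt : max a (ν / 4) < ν / 2 := max_lt ha (by linarith)
      have h0 : 0 < max a (ν / 4) := lt_max_of_lt_right (by linarith)
      have h1 := hanti _ _ h0 hlt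
      rw [hν2] at h1
      filter_upwards [hmem, mem_nhdsWithin_of_mem_nhds (Iio_mem_nhds h1)] with k hkm hk1
      exact (le_max_left _ _).trans_lt (hlow k hkm _ hk1)
    · filter_upwards [hmem] with k hkm
      exact (hϱ k hkm).1.2.trans hb'
end
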